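/- Let $X$ be a Hermitian positive semidefinite complex matrix on the tensor product space indexed by $n_1 \times n_2$ satisfying $\mathrm{tr}_2 X = \hat{1}_1$. Then there exists a finite family of complex matrices $(A^{(k)})_k$ indexed by $n_2 \times n_1$ such that $X = \sum_k |A^{(k)}\rangle\rangle\langle\langle A^{(k)}|$ and $\sum_k A^{(k)\dagger} A^{(k)} = \hat{1}_1$; consequently the map $\varrho \mapsto \mathrm{tr}_1\big((\varrho^{\top} \otimes \hat{1}_2) X\big)$ equals the completely positive trace preserving map $\varrho \mapsto \sum_k A^{(k)} \varrho A^{(k)\dagger}$. -/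

import Mathlib

open Matrix Kronecker ComplexOrder

/-- The vectorization `|C⟩⟩` of a matrix `C : Matrix n₂ n₁ ℂ`: the vector indexed
by pairs `(j, i) ∈ n₁ × n₂` whose `(j, i)` coordinate is `C i j`. -/
def matVec {n₁ n₂ : Type*} (C : Matrix n₂ n₁ ℂ) : n₁ × n₂ → ℂ :=
  fun p => C p.2 p.1

/-- The rank-one operator `|C₁⟩⟩⟨⟨C₂|` on the tensor product space. -/
def outerVec {n₁ n₂ : Type*} (C₁ C₂ : Matrix n₂ n₁ ℂ) :
    Matrix (n₁ × n₂) (n₁ × n₂) ℂ :=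
  fun p q => matVec C₁ p * star (matVec C₂ q)

/-- Partial trace over the first tensor factor. -/
noncomputable def ptr1 {n₁ n₂ : Type*} [Fintype n₁]
    (M : Matrix (n₁ × n₂) (n₁ × n₂) ℂ) : Matrix n₂ n₂ ℂ :=
  fun k l => ∑ i : n₁, M (i, k) (i, l)

/-- Partial trace over the second tensor factor. -/
noncomputable def ptr2 {n₁ n₂ : Type*} [Fintype n₂]
    (M : Matrix (n₁ × n₂) (n₁ × n₂) ℂ) : Matrix n₁ n₁ ℂ :=
  fun j m => ∑ k : n₂, M (j, k) (m, k)

/-- A Hermitian positive semidefinite matrix `X` on the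
tensor product space with `tr₂ X = 1` is the Choi matrix of a CPTP map:
there are Kraus operators `A k` with `X = ∑ k, |A k⟩⟩⟨⟨A k|`,
`∑ k, (A k)ᴴ * A k = 1`, and the induced map `ρ ↦ tr₁ ((ρᵀ ⊗ 1) * X)`
coincides with `ρ ↦ ∑ k, A k * ρ * (A k)ᴴ`. -/
theorem choi_matrix_gives_kraus
    {n₁ n₂ : Type*} [Fintype n₁] [Fintype n₂] [DecidableEq n₁] [DecidableEq n₂]
    (X : Matrix (n₁ × n₂) (n₁ × n₂) ℂ) (hX : X.PosSemidef)
    (hTP : ptr2 X = (1 : Matrix n₁ n₁ ℂ)) :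
    ∃ (ι : Type) (_ : Fintype ι) (A : ι → Matrix n₂ n₁ ℂ),
      X = (∑ k, outerVec (A k) (A k)) ∧
      (∑ k, (A k)ᴴ * A k) = (1 : Matrix n₁ n₁ ℂ) ∧
      ∀ ρ : Matrix n₁ n₁ ℂ,
        ptr1 ((ρᵀ ⊗ₖ (1 : Matrix n₂ n₂ ℂ)) * X) = ∑ k, A k * ρ * (A k)ᴴ := by
  obtain ⟨m, v, hv⟩ := Matrix.posSemidef_iff_eq_sum_vecMulVec.mp hX
  have hXe : ∀ p q, X p q = ∑ k, v k p * star (v k q) := by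
    intro p q
    rw [hv, Matrix.sum_apply]
    rfl
  refine ⟨Fin m, inferInstance, fun k => Matrix.of fun i j => v k (j, i), ?_, ?_, ?_⟩
  · ext p q
    rw [hXe, Matrix.sum_apply]
    rfl
  · ext a b
    have h := congrFun (congrFun hTP b) a
    simp only [ptr2, hXe] at h
    rw [Finset.sum_comm] at h
    rw [Matrix.sum_apply]
    simp only [Matrix.mul_apply, Matrix.conjTranspose_apply, Matrix.of_apply]
    rw [show (1 : Matrix n₁ n₁ ℂ) a b = (1 : Matrix n₁ n₁ ℂ) b a by
      simp [Matrix.one_apply, eq_comm], ← h]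
    exact Finset.sum_congr rfl fun _ _ => Finset.sum_congr rfl fun _ _ => mul_comm _ _
  · intro ρ
    ext a b
    have hL : ptr1 ((ρᵀ ⊗ₖ (1 : Matrix n₂ n₂ ℂ)) * X) a b
        = ∑ i, ∑ j, ρ j i * X (j, a) (i, b) := by
      simp only [ptr1, Matrix.mul_apply, Matrix.kroneckerMap_apply, Matrix.transpose_apply,
        Fintype.sum_prod_type]
      refine Finset.sum_congr rfl fun i _ => Finset.sum_congr rfl fun j _ => ?_
      rw [Finset.sum_eq_single a]
      · simp
      · intro c _ hc
        simp [Matrix.one_apply_ne hc.symm]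
      · simp
    rw [hL, Matrix.sum_apply]
    simp only [Matrix.mul_apply, Matrix.conjTranspose_apply, Matrix.of_apply,
      hXe, Finset.mul_sum, Finset.sum_mul]
    rw [Finset.sum_comm (s := (Finset.univ : Finset (Fin m)))]
    refine Finset.sum_congr rfl fun i _ => ?_
    rw [Finset.sum_comm]
    exact Finset.sum_congr rfl fun _ _ => Finset.sum_congr rfl fun _ _ => by ring
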